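/- arXiv:1708.09358 — 6 statements merged into one kernel-verified Lean document; each statement's English description precedes it below -/
import Mathlib

section
/- The group of units of the order 𝔟 = ℤ·1 + ℤ·i + ℤ·h + ℤ·l is exactly the twelve-element set {±1, ±i, ±h, ±l, ±ih, ±il}; it has order 12 and is isomorphic to the dicyclic group of order 12 (the binary dihedral group D₁₂). -/
/- STATEMENT 2: With h = (i + √3·j)/2 and l = (1 + √3·k)/2, the group of units of the
order 𝔟 = ℤ·1 + ℤ·i + ℤ·h + ℤ·l is exactly the twelve-element set
{±1, ±i, ±h, ±l, ±ih, ±il}; it has order 12 and is isomorphic to the dicyclic group of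
order 12 (the binary dihedral group D₁₂, `QuaternionGroup 3` in Mathlib). -/

open scoped Quaternion

/-- The quaternion `i`. -/
noncomputable def qi : ℍ[ℝ] := ⟨0, 1, 0, 0⟩
/-- The quaternion `j`. -/
noncomputable def qj : ℍ[ℝ] := ⟨0, 0, 1, 0⟩
/-- The quaternion `k`. -/
noncomputable def qk : ℍ[ℝ] := ⟨0, 0, 0, 1⟩
/-- The quaternion `h = (i + √3 j)/2`. -/
noncomputable def qh : ℍ[ℝ] := (qi + (Real.sqrt 3 : ℝ) • qj) / 2
/-- The quaternion `l = (1 + √3 k)/2`. -/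
noncomputable def ql : ℍ[ℝ] := (1 + (Real.sqrt 3 : ℝ) • qk) / 2

/-- The lattice element with coordinates `(a, b, c, d)`. -/
noncomputable def bQ (t : ℤ × ℤ × ℤ × ℤ) : ℍ[ℝ] :=
  (t.1 : ℍ[ℝ]) + (t.2.1 : ℍ[ℝ]) * qi + (t.2.2.1 : ℍ[ℝ]) * qh + (t.2.2.2 : ℍ[ℝ]) * ql

/-- Multiplication in coordinates. -/
def bMul (s t : ℤ × ℤ × ℤ × ℤ) : ℤ × ℤ × ℤ × ℤ :=
  let (a, b, c, d) := s
  let (a', b', c', d') := t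
  (a * a' - d * d' - (b * (b' + c') + c * c'),
   a * b' - d * c' + (b * (a' + d') + c * d'),
   a * c' + d * b' + d * c' + (- b * d' + c * (a' + d') - c * d'),
   a * d' + d * a' + d * d' - (- b * c' + c * (b' + c') - c * c'))

/-- The norm form. -/
def bN (t : ℤ × ℤ × ℤ × ℤ) : ℤ :=
  t.1 ^ 2 + t.1 * t.2.2.2 + t.2.2.2 ^ 2 + t.2.1 ^ 2 + t.2.1 * t.2.2.1 + t.2.2.1 ^ 2

/-- Coordinates of the units. -/
def bV : QuaternionGroup 3 → ℤ × ℤ × ℤ × ℤ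
  | .a n => (![(1,0,0,0), (0,0,0,1), (-1,0,0,1), (-1,0,0,0), (0,0,0,-1), (1,0,0,-1)] :
      Fin 6 → ℤ × ℤ × ℤ × ℤ) n
  | .xa n => (![(0,1,0,0), (0,1,-1,0), (0,0,-1,0), (0,-1,0,0), (0,-1,1,0), (0,0,1,0)] :
      Fin 6 → ℤ × ℤ × ℤ × ℤ) n

/-- Constructor of real quaternions. -/
def mkQ (a b c d : ℝ) : ℍ[ℝ] := ⟨a, b, c, d⟩

@[simp] theorem mkQ_re (a b c d : ℝ) : (mkQ a b c d).re = a := rfl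
@[simp] theorem mkQ_imI (a b c d : ℝ) : (mkQ a b c d).imI = b := rfl
@[simp] theorem mkQ_imJ (a b c d : ℝ) : (mkQ a b c d).imJ = c := rfl
@[simp] theorem mkQ_imK (a b c d : ℝ) : (mkQ a b c d).imK = d := rfl

theorem qi_eq : qi = mkQ 0 1 0 0 := rfl
theorem qj_eq : qj = mkQ 0 0 1 0 := rfl
theorem qk_eq : qk = mkQ 0 0 0 1 := rfl

theorem half_eq (q : ℍ[ℝ]) : q / 2 = (2⁻¹ : ℝ) • q := by
  rw [← Quaternion.mul_coe_eq_smul, Quaternion.coe_inv, div_eq_mul_inv]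
  rfl

theorem qh_eq : qh = mkQ 0 (1/2) (√3/2) 0 := by
  rw [qh, half_eq, qi_eq, qj_eq]
  ext <;> simp <;> ring

theorem ql_eq : ql = mkQ (1/2) 0 0 (√3/2) := by
  rw [ql, half_eq, qk_eq]
  ext <;> simp <;> ring

theorem bQ_eq (a b c d : ℤ) :
    bQ (a, b, c, d) = mkQ (a + d / 2) (b + c / 2) (c * √3 / 2) (d * √3 / 2) := by
  rw [bQ, qh_eq, ql_eq, qi_eq]
  ext <;> simp <;> ring

theorem bQ_mul (s t : ℤ × ℤ × ℤ × ℤ) : bQ s * bQ t = bQ (bMul s t) := by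
  obtain ⟨a, b, c, d⟩ := s
  obtain ⟨a', b', c', d'⟩ := t
  have h3 : √3 ^ 2 = (3 : ℝ) := Real.sq_sqrt (by norm_num)
  simp only [bMul, bQ_eq]
  ext <;> simp <;> ring_nf <;> (try rw [h3]) <;> (try ring)

theorem bQ_inj : Function.Injective bQ := by
  rintro ⟨a, b, c, d⟩ ⟨a', b', c', d'⟩ h
  have h3 : √3 ≠ (0 : ℝ) := by positivity
  rw [bQ_eq, bQ_eq] at h
  have h1 : (a + d / 2 : ℝ) = a' + d' / 2 := congrArg QuaternionAlgebra.re h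
  have h2 : (b + c / 2 : ℝ) = b' + c' / 2 := congrArg QuaternionAlgebra.imI h
  have h4 : (c * √3 / 2 : ℝ) = c' * √3 / 2 := congrArg QuaternionAlgebra.imJ h
  have h5 : (d * √3 / 2 : ℝ) = d' * √3 / 2 := congrArg QuaternionAlgebra.imK h
  have hc : (c : ℝ) = c' := mul_right_cancel₀ h3 (by linarith)
  have hd : (d : ℝ) = d' := mul_right_cancel₀ h3 (by linarith)
  have ha : (a : ℝ) = a' := by rw [hd] at h1; linarith
  have hb : (b : ℝ) = b' := by rw [hc] at h2; linarith
  norm_cast at ha hb hc hd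
  simp [ha, hb, hc, hd]

theorem bN_mul (s t : ℤ × ℤ × ℤ × ℤ) : bN (bMul s t) = bN s * bN t := by
  simp only [bN, bMul]; ring

theorem bN_nonneg (s : ℤ × ℤ × ℤ × ℤ) : 0 ≤ bN s := by
  obtain ⟨a, b, c, d⟩ := s
  simp only [bN]
  nlinarith [sq_nonneg (a + d), sq_nonneg a, sq_nonneg d, sq_nonneg (b + c), sq_nonneg b,
    sq_nonneg c]

theorem bN_one (s : ℤ × ℤ × ℤ × ℤ) (h : bN s = 1) : ∃ x, bV x = s := by
  obtain ⟨a, b, c, d⟩ := s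
  simp only [bN] at h
  have bd : ∀ x : ℤ, 3 * x ^ 2 ≤ 4 → x ∈ Finset.Icc (-1 : ℤ) 1 := by
    intro x hx
    rw [Finset.mem_Icc]
    constructor <;> nlinarith
  have ha := bd a (by nlinarith [sq_nonneg (a + 2 * d), sq_nonneg (b + 2 * c), sq_nonneg b])
  have hd := bd d (by nlinarith [sq_nonneg (d + 2 * a), sq_nonneg (b + 2 * c), sq_nonneg b])
  have hb := bd b (by nlinarith [sq_nonneg (a + 2 * d), sq_nonneg (b + 2 * c), sq_nonneg a])
  have hc := bd c (by nlinarith [sq_nonneg (a + 2 * d), sq_nonneg (c + 2 * b), sq_nonneg a])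
  have key : ∀ a ∈ Finset.Icc (-1 : ℤ) 1, ∀ b ∈ Finset.Icc (-1 : ℤ) 1,
      ∀ c ∈ Finset.Icc (-1 : ℤ) 1, ∀ d ∈ Finset.Icc (-1 : ℤ) 1,
      a ^ 2 + a * d + d ^ 2 + b ^ 2 + b * c + c ^ 2 = 1 →
      ((∃ n, bV (.a n) = (a, b, c, d)) ∨ ∃ n, bV (.xa n) = (a, b, c, d)) := by
    change ∀ a ∈ Finset.Icc (-1 : ℤ) 1, ∀ b ∈ Finset.Icc (-1 : ℤ) 1,
      ∀ c ∈ Finset.Icc (-1 : ℤ) 1, ∀ d ∈ Finset.Icc (-1 : ℤ) 1,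
      a ^ 2 + a * d + d ^ 2 + b ^ 2 + b * c + c ^ 2 = 1 →
      ((∃ n : Fin 6, bV (.a n) = (a, b, c, d)) ∨ ∃ n : Fin 6, bV (.xa n) = (a, b, c, d))
    decide +kernel
  rcases key a ha b hb c hc d hd h with ⟨n, hn⟩ | ⟨n, hn⟩
  exacts [⟨_, hn⟩, ⟨_, hn⟩]

theorem bV_mul : ∀ x y : QuaternionGroup 3, bV (x * y) = bMul (bV x) (bV y) := by
  have h : ∀ m n : Fin 6,
      bV (.a m * .a n) = bMul (bV (.a m)) (bV (.a n)) ∧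
      bV (.a m * .xa n) = bMul (bV (.a m)) (bV (.xa n)) ∧
      bV (.xa m * .a n) = bMul (bV (.xa m)) (bV (.a n)) ∧
      bV (.xa m * .xa n) = bMul (bV (.xa m)) (bV (.xa n)) := by decide +kernel
  rintro (m | m) (n | n)
  exacts [(h m n).1, (h m n).2.1, (h m n).2.2.1, (h m n).2.2.2]

theorem bV_inj : Function.Injective bV := by
  have h : ∀ m n : Fin 6,
      (bV (.a m) = bV (.a n) → m = n) ∧ (bV (.a m) ≠ bV (.xa n)) ∧
      (bV (.xa m) = bV (.xa n) → m = n) := by decide +kernel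
  rintro (m | m) (n | n) e
  · exact congrArg _ ((h m n).1 e)
  · exact absurd e (h m n).2.1
  · exact absurd e.symm (h n m).2.1
  · exact congrArg _ ((h m n).2.2 e)

theorem bQ_one : bQ (1, 0, 0, 0) = 1 := by simp [bQ]

/-- The embedding of the dicyclic group. -/
noncomputable def bHom : QuaternionGroup 3 →* ℍ[ℝ] where
  toFun x := bQ (bV x)
  map_one' := bQ_one
  map_mul' x y := by rw [bV_mul, bQ_mul]

theorem bHom_range : Set.range bHom =
    ({1, -1, qi, -qi, qh, -qh, ql, -ql, qi * qh, -(qi * qh), qi * ql, -(qi * ql)} : Set ℍ[ℝ]) := by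
  have e1 : qi * qh = ql - 1 := by
    rw [qh_eq, ql_eq, qi_eq]; ext <;> simp <;> norm_num
  have e2 : qi * ql = qi - qh := by
    rw [qh_eq, ql_eq, qi_eq]; ext <;> simp <;> norm_num
  have h : ∀ q, q ∈ Set.range bHom ↔ (∃ n : Fin 6, bQ (bV (.a n)) = q) ∨
      (∃ n : Fin 6, bQ (bV (.xa n)) = q) := by
    intro q
    constructor
    · rintro ⟨(n | n), hn⟩
      exacts [.inl ⟨n, hn⟩, .inr ⟨n, hn⟩]
    · rintro (⟨n, hn⟩ | ⟨n, hn⟩)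
      exacts [⟨_, hn⟩, ⟨_, hn⟩]
  ext q
  rw [h, e1, e2]
  simp only [Fin.exists_fin_succ, bV]
  simp [bQ, eq_comm (b := q), sub_eq_add_neg, add_comm]
  tauto

theorem order_b_units
    (R : Subring ℍ[ℝ])
    (hR : (R : Set ℍ[ℝ]) =
      {q : ℍ[ℝ] | ∃ a b c d : ℤ, q = (a : ℍ[ℝ]) + (b : ℍ[ℝ]) * qi + (c : ℍ[ℝ]) * qh + (d : ℍ[ℝ]) * ql}) :
    ({q : ℍ[ℝ] | ∃ u : Rˣ, ((u : R) : ℍ[ℝ]) = q} =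
      ({1, -1, qi, -qi, qh, -qh, ql, -ql, qi * qh, -(qi * qh), qi * ql, -(qi * ql)} : Set ℍ[ℝ])) ∧
    Nat.card Rˣ = 12 ∧
    Nonempty (Rˣ ≃* QuaternionGroup 3) := by
  have hmem : ∀ q, q ∈ R ↔ ∃ t, bQ t = q := by
    intro q
    rw [← SetLike.mem_coe, hR]
    constructor
    · rintro ⟨a, b, c, d, rfl⟩
      exact ⟨(a, b, c, d), rfl⟩
    · rintro ⟨⟨a, b, c, d⟩, rfl⟩
      exact ⟨a, b, c, d, rfl⟩
  let g : QuaternionGroup 3 →* R := bHom.codRestrict R (fun x => (hmem _).2 ⟨bV x, rfl⟩)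
  let f : QuaternionGroup 3 →* Rˣ := g.toHomUnits
  have hf : ∀ x, ((f x : R) : ℍ[ℝ]) = bQ (bV x) := fun x => rfl
  have finj : Function.Injective f := by
    intro x y h
    apply bV_inj
    apply bQ_inj
    rw [← hf, ← hf, h]
  have fsurj : Function.Surjective f := by
    intro u
    obtain ⟨s, hs⟩ := (hmem _).1 (u : R).2
    obtain ⟨t, ht⟩ := (hmem _).1 ((u⁻¹ : Rˣ) : R).2
    have h1 : bQ (bMul s t) = bQ (1, 0, 0, 0) := by
      rw [← bQ_mul, hs, ht, bQ_one, ← Subring.coe_mul, Units.mul_inv, Subring.coe_one]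
    have h2 := congrArg bN (bQ_inj h1)
    rw [bN_mul] at h2
    have h3 : bN s = 1 := Int.eq_one_of_mul_eq_one_right (bN_nonneg s) h2
    obtain ⟨x, hx⟩ := bN_one s h3
    exact ⟨x, Units.ext (Subtype.ext (by rw [hf, hx, hs]))⟩
  let e := MulEquiv.ofBijective f ⟨finj, fsurj⟩
  refine ⟨?_, ?_, ⟨e.symm⟩⟩
  · rw [← bHom_range]
    ext q
    constructor
    · rintro ⟨u, rfl⟩
      obtain ⟨x, rfl⟩ := fsurj u
      exact ⟨x, rfl⟩
    · rintro ⟨x, rfl⟩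
      exact ⟨f x, rfl⟩
  · rw [← Nat.card_congr e.toEquiv, Nat.card_eq_fintype_card, QuaternionGroup.card]
end

section
/- The subgroup T̂₂₄ of bijections of T = ℍ/𝔞 generated by Q̂₈ together with the affine map (t; s/2), where s = (1+i−j+k)/2, has order 24 and is isomorphic to SL₂(𝔽₃) (the binary tetrahedral group T₂₄). -/
/- STATEMENT 5: The subgroup T̂₂₄ of bijections of T = ℍ/𝔞 generated by Q̂₈ together
with the affine map (t; s/2), where s = (1+i−j+k)/2, has order 24 and is isomorphic to
SL₂(𝔽₃) (the binary tetrahedral group T₂₄). -/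

open scoped Quaternion

noncomputable def qt : ℍ[ℝ] := (1 + qi + qj + qk) / 2
noncomputable def qα : ℍ[ℝ] := (1 + qi) / 2
noncomputable def qs : ℍ[ℝ] := (1 + qi - qj + qk) / 2

/-- The Hurwitz order `𝔞 = ℤ·1 + ℤ·i + ℤ·j + ℤ·t` as an additive subgroup of `ℍ`. -/
noncomputable def hurwitz : AddSubgroup ℍ[ℝ] := AddSubgroup.closure {1, qi, qj, qt}

/-- The real torus `T = ℍ/𝔞`. -/
noncomputable abbrev T := ℍ[ℝ] ⧸ hurwitz

/-- The class map `ℍ → T = ℍ/𝔞`. -/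
noncomputable def π : ℍ[ℝ] → T := QuotientAddGroup.mk

/-- The relations of the binary tetrahedral group used below. -/
structure Rel24 {K : Type*} [Group K] (x y z : K) : Prop where
  r1 : x ^ 4 = 1
  r2 : y * y = x * x
  r3 : y * x = x ^ 3 * y
  r4 : z * z * z = x * x
  r5 : z * x = y * z
  r6 : z * y = x * y * z

theorem Rel24.mem {K : Type*} [Group K] {x y z : K} (h : Rel24 x y z) (g : K)
    (hg : g ∈ Subgroup.closure ({x, y, z} : Set K)) :
    ∃ a b c : ℕ, g = x ^ a * y ^ b * z ^ c := by
  obtain ⟨r1, r2, r3, r4, r5, r6⟩ := h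
  have yx : ∀ a : ℕ, y * x ^ a = x ^ (3 * a) * y := by
    intro a
    induction a with
    | zero => simp
    | succ n ih => rw [pow_succ, ← mul_assoc, ih, mul_assoc, r3, ← mul_assoc, ← pow_add]; rfl
  have ymul : ∀ g : K, (∃ a b c : ℕ, g = x ^ a * y ^ b * z ^ c) →
      ∃ a b c : ℕ, y * g = x ^ a * y ^ b * z ^ c := by
    rintro g ⟨a, b, c, rfl⟩
    refine ⟨3 * a, b + 1, c, ?_⟩
    rw [← mul_assoc, ← mul_assoc, yx, pow_succ' y]
    simp only [mul_assoc]
  have xmul : ∀ g : K, (∃ a b c : ℕ, g = x ^ a * y ^ b * z ^ c) →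
      ∃ a b c : ℕ, x * g = x ^ a * y ^ b * z ^ c := by
    rintro g ⟨a, b, c, rfl⟩
    refine ⟨a + 1, b, c, ?_⟩
    rw [pow_succ' x]
    simp only [mul_assoc]
  have zy : ∀ b c : ℕ, ∃ a' b' c' : ℕ, z * (y ^ b * z ^ c) = x ^ a' * y ^ b' * z ^ c' := by
    intro b
    induction b with
    | zero => intro c; exact ⟨0, 0, c + 1, by simp [pow_succ']⟩
    | succ n ih =>
      intro c
      have e : z * (y ^ (n + 1) * z ^ c) = x * (y * (z * (y ^ n * z ^ c))) := by
        rw [pow_succ' y]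
        simp only [← mul_assoc]
        rw [r6]
      rw [e]
      exact xmul _ (ymul _ (ih c))
  have zx : ∀ a b c : ℕ, ∃ a' b' c' : ℕ,
      z * (x ^ a * y ^ b * z ^ c) = x ^ a' * y ^ b' * z ^ c' := by
    intro a
    induction a with
    | zero => intro b c; simpa using zy b c
    | succ n ih =>
      intro b c
      have e : z * (x ^ (n + 1) * y ^ b * z ^ c) = y * (z * (x ^ n * y ^ b * z ^ c)) := by
        rw [pow_succ' x]
        simp only [← mul_assoc]
        rw [r5]
      rw [e]
      exact ymul _ (ih b c)
  have zmul : ∀ g : K, (∃ a b c : ℕ, g = x ^ a * y ^ b * z ^ c) →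
      ∃ a b c : ℕ, z * g = x ^ a * y ^ b * z ^ c := by
    rintro g ⟨a, b, c, rfl⟩
    exact zx a b c
  have xi : x⁻¹ = x * x * x := by
    rw [inv_eq_iff_mul_eq_one, ← r1]; simp [pow_succ, mul_assoc]
  have yi : y⁻¹ = y * x * x := by
    rw [inv_eq_iff_mul_eq_one, ← r1]
    simp only [← mul_assoc]
    rw [r2]; simp [pow_succ, mul_assoc]
  have zi : z⁻¹ = z * z * x * x := by
    rw [inv_eq_iff_mul_eq_one, ← r1]
    simp only [← mul_assoc]
    rw [r4]; simp [pow_succ, mul_assoc]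
  induction hg using Subgroup.closure_induction_left with
  | one => exact ⟨0, 0, 0, by simp⟩
  | mul_left u hu v hv ih =>
    rcases hu with rfl | rfl | rfl
    · exact xmul _ ih
    · exact ymul _ ih
    · exact zmul _ ih
  | inv_mul_cancel u hu v hv ih =>
    rcases hu with rfl | rfl | rfl
    · rw [xi, mul_assoc, mul_assoc]; exact xmul _ (xmul _ (xmul _ ih))
    · rw [yi, mul_assoc, mul_assoc]; exact ymul _ (xmul _ (xmul _ ih))
    · rw [zi, mul_assoc, mul_assoc, mul_assoc]; exact zmul _ (zmul _ (xmul _ (xmul _ ih)))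

theorem Rel24.mem' {K : Type*} [Group K] {x y z : K} (h : Rel24 x y z) (g : K)
    (hg : g ∈ Subgroup.closure ({x, y, z} : Set K)) :
    ∃ p : Fin 4 × Fin 2 × Fin 3, g = x ^ p.1.val * y ^ p.2.1.val * z ^ p.2.2.val := by
  obtain ⟨a, b, c, rfl⟩ := h.mem g hg
  obtain ⟨r1, r2, r3, r4, r5, r6⟩ := h
  have cy : Commute (x * x) y := by rw [← r2]; exact (Commute.refl y).mul_left (Commute.refl y)
  have cz : Commute (x * x) z := by
    rw [← r4]
    exact (((Commute.refl z).mul_left (Commute.refl z)).mul_left (Commute.refl z))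
  have hy : y ^ b = (x * x) ^ (b / 2) * y ^ (b % 2) := by
    conv_lhs => rw [← Nat.div_add_mod b 2, pow_add, pow_mul, pow_two, r2]
  have hz : z ^ c = (x * x) ^ (c / 3) * z ^ (c % 3) := by
    conv_lhs => rw [← Nat.div_add_mod c 3, pow_add, pow_mul, pow_succ, pow_two, r4]
  have hx : ∀ n : ℕ, x ^ n = x ^ (n % 4) := by
    intro n
    conv_lhs => rw [← Nat.div_add_mod n 4, pow_add, pow_mul, r1, one_pow, one_mul]
  refine ⟨(⟨(a + 2 * (b / 2) + 2 * (c / 3)) % 4, Nat.mod_lt _ (by norm_num)⟩,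
    ⟨b % 2, Nat.mod_lt _ (by norm_num)⟩, ⟨c % 3, Nat.mod_lt _ (by norm_num)⟩), ?_⟩
  simp only
  rw [← hx, hy, hz, pow_add, pow_add, pow_mul, pow_mul, pow_two]
  have e := (cy.pow_pow (c / 3) (b % 2)).eq
  simp only [mul_assoc] at e ⊢
  rw [← mul_assoc (y ^ (b % 2)), ← e]
  simp only [mul_assoc]

/-- The group `SL₂(𝔽₃)`. -/
abbrev S23 := Matrix.SpecialLinearGroup (Fin 2) (ZMod 3)

def mX : S23 := ⟨!![0, -1; 1, 0], by decide⟩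
def mY : S23 := ⟨!![1, 1; 1, -1], by decide⟩
def mZ : S23 := ⟨!![-1, -1; 0, -1], by decide⟩

theorem relM : Rel24 mX mY mZ := by
  constructor <;> decide

set_option maxRecDepth 100000 in
set_option maxHeartbeats 4000000 in
theorem cardS : Nat.card S23 = 24 := by
  rw [Nat.card_eq_fintype_card]
  decide

set_option maxRecDepth 100000 in
set_option maxHeartbeats 4000000 in
theorem genM : ∀ g : S23, ∃ p : Fin 4 × Fin 2 × Fin 3,
    mX ^ p.1.val * mY ^ p.2.1.val * mZ ^ p.2.2.val = g := by
  decide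

set_option maxRecDepth 100000 in
set_option maxHeartbeats 4000000 in
theorem normM : ∀ p : Fin 4 × Fin 2 × Fin 3,
    mX ^ p.1.val * mY ^ p.2.1.val * mZ ^ p.2.2.val = 1 ∨
    mX ^ p.1.val * mY ^ p.2.1.val * mZ ^ p.2.2.val = mX ^ 2 ∨
    (mX ^ p.1.val * mY ^ p.2.1.val * mZ ^ p.2.2.val) ^ 2 = mX ^ 2 ∨
    (mX ^ p.1.val * mY ^ p.2.1.val * mZ ^ p.2.2.val) ^ 3 = mX ^ 2 ∨
    (mX ^ p.1.val * mY ^ p.2.1.val * mZ ^ p.2.2.val * (mX *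
      (mX ^ p.1.val * mY ^ p.2.1.val * mZ ^ p.2.2.val)⁻¹ * mX⁻¹)) ^ 2 = mX ^ 2 := by
  decide

theorem abstract24 {P : Type*} [Group P] {x y z : P} (h : Rel24 x y z) (hx : x ^ 2 ≠ 1) :
    Nonempty (Subgroup.closure ({x, y, z} : Set P) ≃* S23) := by
  let D : Subgroup (P × S23) := Subgroup.closure {(x, mX), (y, mY), (z, mZ)}
  have hD : Rel24 (x, mX) (y, mY) (z, mZ) := by
    obtain ⟨a1, a2, a3, a4, a5, a6⟩ := h
    obtain ⟨b1, b2, b3, b4, b5, b6⟩ := relM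
    constructor <;> (apply Prod.ext <;> assumption)
  have xD : (x, mX) ∈ D := Subgroup.subset_closure (by simp)
  have yD : (y, mY) ∈ D := Subgroup.subset_closure (by simp)
  have zD : (z, mZ) ∈ D := Subgroup.subset_closure (by simp)
  let p2 : D →* S23 := (MonoidHom.snd P S23).comp D.subtype
  let p1 : D →* P := (MonoidHom.fst P S23).comp D.subtype
  let F : Fin 4 × Fin 2 × Fin 3 → D := fun p =>
    ⟨(x, mX), xD⟩ ^ p.1.val * ⟨(y, mY), yD⟩ ^ p.2.1.val * ⟨(z, mZ), zD⟩ ^ p.2.2.val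
  have Fs : Function.Surjective F := by
    rintro ⟨g, hg⟩
    obtain ⟨p, hp⟩ := hD.mem' g hg
    exact ⟨p, Subtype.ext hp.symm⟩
  have p2s : Function.Surjective p2 := by
    intro g
    obtain ⟨p, hp⟩ := genM g
    exact ⟨F p, hp⟩
  have finD : Finite D := Finite.of_surjective F Fs
  have cD : Nat.card D ≤ Nat.card S23 := by
    rw [cardS]
    have := Nat.card_le_card_of_surjective F Fs
    simpa using this
  have p2b : Function.Bijective p2 := (Nat.bijective_iff_surjective_and_card p2).2
    ⟨p2s, le_antisymm cD (Nat.card_le_card_of_surjective p2 p2s)⟩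
  let e : D ≃* S23 := MulEquiv.ofBijective p2 p2b
  let φ : S23 →* P := p1.comp e.symm.toMonoidHom
  have φe : ∀ d : D, φ (p2 d) = p1 d := by
    intro d
    exact congrArg p1 (e.symm_apply_apply d)
  have φX : φ mX = x := φe ⟨(x, mX), xD⟩
  have φY : φ mY = y := φe ⟨(y, mY), yD⟩
  have φZ : φ mZ = z := φe ⟨(z, mZ), zD⟩
  have φi : Function.Injective φ := by
    rw [injective_iff_map_eq_one]
    intro g hg
    by_contra hne
    obtain ⟨p, rfl⟩ := genM g
    apply hx
    rw [← φX, ← map_pow]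
    rcases normM p with h | h | h | h | h
    · exact absurd h hne
    all_goals rw [← h]
    · exact hg
    · rw [map_pow, hg, one_pow]
    · rw [map_pow, hg, one_pow]
    · rw [map_pow, map_mul, hg, map_mul, map_mul, map_inv, hg, map_inv]; simp
  have hr : φ.range = Subgroup.closure ({x, y, z} : Set P) := by
    apply le_antisymm
    · rintro _ ⟨g, rfl⟩
      obtain ⟨p, rfl⟩ := genM g
      simp only [map_mul, map_pow, φX, φY, φZ]
      refine mul_mem (mul_mem (pow_mem ?_ _) (pow_mem ?_ _)) (pow_mem ?_ _) <;>
        exact Subgroup.subset_closure (by simp)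
    · rw [Subgroup.closure_le]
      rintro _ (rfl | rfl | rfl)
      exacts [⟨mX, φX⟩, ⟨mY, φY⟩, ⟨mZ, φZ⟩]
  rw [← hr]
  exact ⟨(MonoidHom.ofInjective φi).symm⟩

theorem π_eq (u v : ℍ[ℝ]) (a b c d : ℤ)
    (h : v - u = a • (1 : ℍ[ℝ]) + b • qi + c • qj + d • qt) : π u = π v := by
  have : -u + v ∈ hurwitz := by
    rw [neg_add_eq_sub, h]
    have s : ∀ w ∈ ({1, qi, qj, qt} : Set ℍ[ℝ]), w ∈ hurwitz :=
      fun w hw => AddSubgroup.subset_closure hw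
    refine add_mem (add_mem (add_mem ?_ ?_) ?_) ?_ <;>
      exact zsmul_mem (s _ (by simp)) _
  exact QuotientAddGroup.eq.2 this

theorem half_eq_s5 (w : ℍ[ℝ]) : w / 2 = (1 / 2 : ℝ) • w := by
  have h : (2 : ℍ[ℝ]) = ((2 : ℝ) : ℍ[ℝ]) := (map_ofNat (algebraMap ℝ ℍ[ℝ]) 2).symm
  rw [div_eq_mul_inv, h, ← Quaternion.coe_inv, Quaternion.mul_coe_eq_smul]
  norm_num

theorem qi_c : qi.re = 0 ∧ qi.imI = 1 ∧ qi.imJ = 0 ∧ qi.imK = 0 := ⟨rfl, rfl, rfl, rfl⟩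

theorem qj_c : qj.re = 0 ∧ qj.imI = 0 ∧ qj.imJ = 1 ∧ qj.imK = 0 := ⟨rfl, rfl, rfl, rfl⟩

theorem qk_c : qk.re = 0 ∧ qk.imI = 0 ∧ qk.imJ = 0 ∧ qk.imK = 1 := ⟨rfl, rfl, rfl, rfl⟩

theorem qt_c : qt.re = 1 / 2 ∧ qt.imI = 1 / 2 ∧ qt.imJ = 1 / 2 ∧ qt.imK = 1 / 2 := by
  rw [qt, half_eq_s5]
  simp [qi_c, qj_c, qk_c]

theorem qα_c : qα.re = 1 / 2 ∧ qα.imI = 1 / 2 ∧ qα.imJ = 0 ∧ qα.imK = 0 := by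
  rw [qα, half_eq_s5]
  simp [qi_c]

theorem qs_c : (qs / 2).re = 1 / 4 ∧ (qs / 2).imI = 1 / 4 ∧ (qs / 2).imJ = -1 / 4 ∧
    (qs / 2).imK = 1 / 4 := by
  rw [qs, half_eq_s5, half_eq_s5]
  simp [qi_c, qj_c, qk_c]
  norm_num

theorem half_int (w : ℍ[ℝ]) (hw : w ∈ hurwitz) : ∃ n : ℤ, 2 * w.re = n := by
  induction hw using AddSubgroup.closure_induction with
  | mem w hw =>
    rcases hw with rfl | rfl | rfl | rfl
    · exact ⟨2, by simp⟩
    · exact ⟨0, by simp [qi_c]⟩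
    · exact ⟨0, by simp [qj_c]⟩
    · refine ⟨1, ?_⟩
      rw [qt_c.1]
      norm_num
  | zero => exact ⟨0, by simp⟩
  | add u v _ _ hu hv =>
    obtain ⟨m, hm⟩ := hu
    obtain ⟨n, hn⟩ := hv
    exact ⟨m + n, by push_cast; rw [← hm, ← hn]; simp; ring⟩
  | neg u _ hu =>
    obtain ⟨m, hm⟩ := hu
    exact ⟨-m, by push_cast; rw [← hm]; simp⟩

theorem That24_subgroup
    (fi fj ft : Equiv.Perm T)
    (hfi : ∀ x : ℍ[ℝ], fi (π x) = π (qi * x))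
    (hfj : ∀ x : ℍ[ℝ], fj (π x) = π (qj * x + qα))
    (hft : ∀ x : ℍ[ℝ], ft (π x) = π (qt * x + qs / 2)) :
    Nat.card (Subgroup.closure
      (((Subgroup.closure ({fi, fj} : Set (Equiv.Perm T)) : Subgroup (Equiv.Perm T)) :
        Set (Equiv.Perm T)) ∪ {ft})) = 24 ∧
    Nonempty (Subgroup.closure
      (((Subgroup.closure ({fi, fj} : Set (Equiv.Perm T)) : Subgroup (Equiv.Perm T)) :
        Set (Equiv.Perm T)) ∪ {ft}) ≃* Matrix.SpecialLinearGroup (Fin 2) (ZMod 3)) := by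
  have hπ : Function.Surjective π := QuotientAddGroup.mk_surjective
  have hcl : Subgroup.closure
      (((Subgroup.closure ({fi, fj} : Set (Equiv.Perm T)) : Subgroup (Equiv.Perm T)) :
        Set (Equiv.Perm T)) ∪ {ft}) = Subgroup.closure {fi, fj, ft} := by
    rw [Subgroup.closure_union, Subgroup.closure_eq, ← Subgroup.closure_union]
    congr 1
    ext g
    simp
    tauto
  have hrel : Rel24 fi fj ft := by
    constructor <;> (ext w; obtain ⟨x, rfl⟩ := hπ w) <;>
      simp only [pow_succ, pow_zero, one_mul, Equiv.Perm.mul_apply, Equiv.Perm.one_apply,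
        hfi, hfj, hft]
    · apply π_eq _ _ 0 0 0 0
      ext <;> simp [qi_c]
    · apply π_eq _ _ (-1) (-1) (-1) 1
      ext <;> simp [qi_c, qj_c, qt_c, qα_c, qs_c] <;> ring
    · apply π_eq _ _ 0 (-1) 0 0
      ext <;> simp [qi_c, qj_c, qt_c, qα_c, qs_c] <;> ring
    · apply π_eq _ _ 0 (-1) 0 0
      ext <;> simp [qi_c, qj_c, qt_c, qα_c, qs_c] <;> ring
    · apply π_eq _ _ 1 1 1 (-1)
      ext <;> simp [qi_c, qj_c, qt_c, qα_c, qs_c] <;> ring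
    · apply π_eq _ _ (-1) 0 0 0
      ext <;> simp [qi_c, qj_c, qt_c, qα_c, qs_c] <;> ring
  have hne : fi ^ 2 ≠ 1 := by
    intro h
    obtain ⟨r, hr⟩ : ∃ r : ℝ, r = 1 / 3 := ⟨_, rfl⟩
    have h1 := congrArg (fun f : Equiv.Perm T => f (π (r : ℍ[ℝ]))) h
    simp only [pow_two, Equiv.Perm.mul_apply, Equiv.Perm.one_apply, hfi] at h1
    obtain ⟨n, hn⟩ := half_int _ (QuotientAddGroup.eq.1 h1)
    simp [qi_c] at hn
    have h3 : (4 : ℝ) = 3 * n := by rw [← hn, hr]; norm_num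
    have h4 : (4 : ℤ) = 3 * n := by exact_mod_cast h3
    omega
  obtain ⟨e⟩ := abstract24 hrel hne
  rw [hcl]
  exact ⟨(Nat.card_congr e.toEquiv).trans cardS, ⟨e⟩⟩
end

section
/- The set of fixed points in T = ℍ/𝔞 of the map (i;0) : x ↦ i·x is exactly the four-element set of 2-torsion points {0000, 1100, 1010, 0110}, i.e. {[0], [(1+i)/2], [(1+j)/2], [(i+j)/2]}. -/
/- STATEMENT 6: The set of fixed points in T = ℍ/𝔞 of the map (i;0) : x ↦ i·x is exactly
the four-element set of 2-torsion points {0000, 1100, 1010, 0110}, i.e.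
{[0], [(1+i)/2], [(1+j)/2], [(i+j)/2]}. -/

open scoped Quaternion

noncomputable def mkq (a b c d : ℝ) : ℍ[ℝ] := ⟨a, b, c, d⟩

@[simp] theorem qi_re : qi.re = 0 := rfl
@[simp] theorem qi_imI : qi.imI = 1 := rfl
@[simp] theorem qi_imJ : qi.imJ = 0 := rfl
@[simp] theorem qi_imK : qi.imK = 0 := rfl
@[simp] theorem qj_re : qj.re = 0 := rfl
@[simp] theorem qj_imI : qj.imI = 0 := rfl
@[simp] theorem qj_imJ : qj.imJ = 1 := rfl
@[simp] theorem qj_imK : qj.imK = 0 := rfl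
@[simp] theorem qk_re : qk.re = 0 := rfl
@[simp] theorem qk_imI : qk.imI = 0 := rfl
@[simp] theorem qk_imJ : qk.imJ = 0 := rfl
@[simp] theorem qk_imK : qk.imK = 1 := rfl
@[simp] theorem mkq_re (a b c d : ℝ) : (mkq a b c d).re = a := rfl
@[simp] theorem mkq_imI (a b c d : ℝ) : (mkq a b c d).imI = b := rfl
@[simp] theorem mkq_imJ (a b c d : ℝ) : (mkq a b c d).imJ = c := rfl
@[simp] theorem mkq_imK (a b c d : ℝ) : (mkq a b c d).imK = d := rfl

theorem half_eq_s6 (x : ℍ[ℝ]) : x / 2 = mkq (x.re / 2) (x.imI / 2) (x.imJ / 2) (x.imK / 2) := by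
  have h2 : (2 : ℍ[ℝ]) ≠ 0 := by
    intro h
    rw [← one_add_one_eq_two] at h
    have := congrArg (fun q : ℍ[ℝ] => q.re) h
    simp at this
  rw [div_eq_iff h2, mul_two]
  ext <;> simp

theorem mem_hurwitz (q : ℍ[ℝ]) : q ∈ hurwitz ↔ ∃ a b c d : ℤ,
    q.re = a + d / 2 ∧ q.imI = b + d / 2 ∧ q.imJ = c + d / 2 ∧ q.imK = d / 2 := by
  have ht : qt = mkq (1/2) (1/2) (1/2) (1/2) := by
    unfold qt
    rw [half_eq_s6]
    ext <;> simp
  constructor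
  · intro h
    unfold hurwitz at h
    induction h using AddSubgroup.closure_induction with
    | mem x hx =>
      rcases hx with rfl | rfl | rfl | rfl
      · exact ⟨1, 0, 0, 0, by simp⟩
      · exact ⟨0, 1, 0, 0, by simp⟩
      · exact ⟨0, 0, 1, 0, by simp⟩
      · exact ⟨0, 0, 0, 1, by simp [ht]⟩
    | zero => exact ⟨0, 0, 0, 0, by simp⟩
    | add x y _ _ hx hy =>
      obtain ⟨a, b, c, d, h1, h2, h3, h4⟩ := hx
      obtain ⟨a', b', c', d', h1', h2', h3', h4'⟩ := hy
      refine ⟨a + a', b + b', c + c', d + d', ?_, ?_, ?_, ?_⟩ <;>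
        simp [h1, h2, h3, h4, h1', h2', h3', h4'] <;> ring
    | neg x _ hx =>
      obtain ⟨a, b, c, d, h1, h2, h3, h4⟩ := hx
      refine ⟨-a, -b, -c, -d, ?_, ?_, ?_, ?_⟩ <;>
        simp [h1, h2, h3, h4] <;> ring
  · rintro ⟨a, b, c, d, h1, h2, h3, h4⟩
    have e : q = a • (1 : ℍ[ℝ]) + b • qi + c • qj + d • qt := by
      rw [ht]
      ext <;> simp [h1, h2, h3, h4] <;> ring
    have hs : ∀ x ∈ ({1, qi, qj, qt} : Set ℍ[ℝ]), x ∈ hurwitz :=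
      fun x hx => AddSubgroup.subset_closure hx
    rw [e]
    refine add_mem (add_mem (add_mem ?_ ?_) ?_) ?_ <;>
      exact zsmul_mem (hs _ (by simp)) _

theorem pi_eq (x y : ℍ[ℝ]) : π x = π y ↔ ∃ a b c d : ℤ,
    y.re - x.re = a + d / 2 ∧ y.imI - x.imI = b + d / 2 ∧
    y.imJ - x.imJ = c + d / 2 ∧ y.imK - x.imK = d / 2 := by
  unfold π
  rw [QuotientAddGroup.eq, mem_hurwitz]
  simp [neg_add_eq_sub]

theorem h1i : (1 + qi) / 2 = ((mkq (1/2) (1/2) 0 0) : ℍ[ℝ]) := by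
  rw [half_eq_s6]; ext <;> simp

theorem h1j : (1 + qj) / 2 = ((mkq (1/2) 0 (1/2) 0) : ℍ[ℝ]) := by
  rw [half_eq_s6]; ext <;> simp

theorem hij : (qi + qj) / 2 = ((mkq 0 (1/2) (1/2) 0) : ℍ[ℝ]) := by
  rw [half_eq_s6]; ext <;> simp

theorem half_int_s6 (a : ℤ) (h : (2 : ℝ) * a = 1 ∨ (2 : ℝ) * a = -1) : False := by
  rcases h with h | h
  · have : 2 * a = 1 := by exact_mod_cast h
    omega
  · have : 2 * a = -1 := by exact_mod_cast h
    omega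

theorem fixed_points_of_i
    (f : T → T) (hf : ∀ x : ℍ[ℝ], f (π x) = π (qi * x)) :
    {x : T | f x = x} =
      ({π 0, π ((1 + qi) / 2), π ((1 + qj) / 2), π ((qi + qj) / 2)} : Set T) ∧
    (∀ x : T, f x = x → x + x = 0) ∧
    Set.ncard {x : T | f x = x} = 4 := by
  have key : {x : T | f x = x} =
      ({π 0, π ((1 + qi) / 2), π ((1 + qj) / 2), π ((qi + qj) / 2)} : Set T) := by
    rw [h1i, h1j, hij]
    ext x
    simp only [Set.mem_ofPred_eq, Set.mem_insert_iff, Set.mem_singleton_iff]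
    constructor
    · obtain ⟨x, rfl⟩ : ∃ y, π y = x := QuotientAddGroup.mk_surjective x
      rw [hf]
      intro h
      obtain ⟨a, b, c, d, h1, h2, h3, h4⟩ := (pi_eq _ _).1 h.symm
      simp at h1 h2 h3 h4
      simp only [pi_eq]
      obtain ⟨m, hm⟩ := Int.even_or_odd' (c - a - b)
      obtain ⟨n, hn⟩ := Int.even_or_odd' d
      rcases hm with hm | hm <;> rcases hn with hn | hn <;>
        rw [sub_sub, sub_eq_iff_eq_add] at hm
      all_goals subst hm hn; push_cast at h1 h2 h3 h4
      · left
        refine ⟨-(b + m + n), -m, -n, 2 * m + (a + b) + 2 * n, ?_, ?_, ?_, ?_⟩ <;>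
          push_cast <;> simp <;> linarith
      · right; right; left
        refine ⟨-(b + m + n), -m, -n, 2 * m + (a + b) + (2 * n + 1), ?_, ?_, ?_, ?_⟩ <;>
          push_cast <;> simp <;> linarith
      · right; left
        refine ⟨-(b + m + n), -m, -n, 2 * m + 1 + (a + b) + 2 * n, ?_, ?_, ?_, ?_⟩ <;>
          push_cast <;> simp <;> linarith
      · right; right; right
        refine ⟨-(b + m + n + 1), -m, -n, 2 * m + 1 + (a + b) + (2 * n + 1), ?_, ?_, ?_, ?_⟩ <;>
          push_cast <;> simp <;> linarith
    · rintro (rfl | rfl | rfl | rfl) <;> rw [hf, pi_eq]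
      · exact ⟨0, 0, 0, 0, by simp⟩
      · exact ⟨1, 0, 0, 0, by simp; norm_num⟩
      · exact ⟨1, 0, 1, -1, by simp; norm_num⟩
      · exact ⟨1, 1, 1, -1, by simp; norm_num⟩
  refine ⟨key, ?_, ?_⟩
  · intro x hx
    have hx' : x ∈ {x : T | f x = x} := hx
    have hadd : ∀ y z : ℍ[ℝ], π y + π z = π (y + z) := fun _ _ => rfl
    have h0 : (0 : T) = π 0 := rfl
    rw [key, h1i, h1j, hij] at hx'
    rcases hx' with rfl | rfl | rfl | rfl <;> rw [hadd, h0, pi_eq]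
    · exact ⟨0, 0, 0, 0, by simp⟩
    · exact ⟨-1, -1, 0, 0, by simp; norm_num⟩
    · exact ⟨-1, 0, -1, 0, by simp; norm_num⟩
    · exact ⟨0, -1, -1, 0, by simp; norm_num⟩
  · rw [key, h1i, h1j, hij]
    have n1 : π 0 ≠ π (mkq (1/2) (1/2) 0 0) := by
      rw [Ne, pi_eq]; rintro ⟨a, b, c, d, h1, h2, h3, h4⟩
      simp at h1 h2 h3 h4
      exact half_int_s6 b (by left; linarith)
    have n2 : π 0 ≠ π (mkq (1/2) 0 (1/2) 0) := by
      rw [Ne, pi_eq]; rintro ⟨a, b, c, d, h1, h2, h3, h4⟩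
      simp at h1 h2 h3 h4
      exact half_int_s6 a (by left; linarith)
    have n3 : π 0 ≠ π (mkq 0 (1/2) (1/2) 0) := by
      rw [Ne, pi_eq]; rintro ⟨a, b, c, d, h1, h2, h3, h4⟩
      simp at h1 h2 h3 h4
      exact half_int_s6 b (by left; linarith)
    have n4 : π (mkq (1/2) (1/2) 0 0) ≠ π (mkq (1/2) 0 (1/2) 0) := by
      rw [Ne, pi_eq]; rintro ⟨a, b, c, d, h1, h2, h3, h4⟩
      simp at h1 h2 h3 h4
      exact half_int_s6 b (by right; linarith)
    have n5 : π (mkq (1/2) (1/2) 0 0) ≠ π (mkq 0 (1/2) (1/2) 0) := by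
      rw [Ne, pi_eq]; rintro ⟨a, b, c, d, h1, h2, h3, h4⟩
      simp at h1 h2 h3 h4
      exact half_int_s6 a (by right; linarith)
    have n6 : π (mkq (1/2) 0 (1/2) 0) ≠ π (mkq 0 (1/2) (1/2) 0) := by
      rw [Ne, pi_eq]; rintro ⟨a, b, c, d, h1, h2, h3, h4⟩
      simp at h1 h2 h3 h4
      exact half_int_s6 a (by right; linarith)
    rw [Set.ncard_insert_of_notMem, Set.ncard_insert_of_notMem, Set.ncard_pair n6]
    · rintro (h | h)
      exacts [n4 h, n5 h]
    · rintro (h | h | h)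
      exacts [n1 h, n2 h, n3 h]
end

section
/- Every element x of the lattice K = K_{Q̂₈} = F + ℤδ₁ + ℤδ₂ with ⟨x,x⟩ = −2 already lies in F = F_{Q̂₈}; that is, the roots of K_{Q̂₈} coincide with the roots of the root lattice A₁ ⊕ A₃^{⊕6}. -/
/- STATEMENT 12: Every element x of K = K_{Q̂₈} = F + ℤδ₁ + ℤδ₂ with ⟨x,x⟩ = −2 already
lies in F = F_{Q̂₈}; that is, the roots of K_{Q̂₈} coincide with the roots of the root
lattice A₁ ⊕ A₃^{⊕6}. -/

open Finset

/-- Gram matrix of the (negative definite) root lattice `A₁ ⊕ A₃^{⊕6}` in the basis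
`C₀ = e 0` and `C_r^s = e (3(r-1)+s)` for `1 ≤ r ≤ 6`, `1 ≤ s ≤ 3`. -/
def gramQ8 : Fin 19 → Fin 19 → ℚ := fun p q =>
  if p = q then -2
  else if (p.1 = q.1 + 1 ∨ q.1 = p.1 + 1) ∧ 1 ≤ p.1 ∧ 1 ≤ q.1 ∧
      (p.1 - 1) / 3 = (q.1 - 1) / 3 then 1
  else 0

/-- The bilinear form `⟨·,·⟩` on `F ⊗ ℚ = ℚ^19` given by the Gram matrix. -/
def BQ8 (x y : Fin 19 → ℚ) : ℚ := ∑ p, ∑ q, x p * gramQ8 p q * y q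

/-- The basis vectors (`C₀`, `C_r^s`). -/
def evec : Fin 19 → (Fin 19 → ℚ) := fun n => Pi.single n 1

/-- `t_r = (C_r^1 + 2C_r^2 + 3C_r^3)/4` for `1 ≤ r ≤ 6` (here `r : Fin 6`). -/
def tvec : Fin 6 → (Fin 19 → ℚ) := fun r p =>
  if p.1 = 3 * r.1 + 1 then 1 / 4
  else if p.1 = 3 * r.1 + 2 then 2 / 4
  else if p.1 = 3 * r.1 + 3 then 3 / 4
  else 0

/-- `δ₁ = t₁ + t₂ + t₃ + t₄ + 2t₅`. -/
def δ₁ : Fin 19 → ℚ := tvec 0 + tvec 1 + tvec 2 + tvec 3 + (2 : ℚ) • tvec 4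

/-- `δ₂ = t₁ + 3t₂ + 2t₃ + t₅ + 3t₆`. -/
def δ₂ : Fin 19 → ℚ := tvec 0 + (3 : ℚ) • tvec 1 + (2 : ℚ) • tvec 2 + tvec 4 + (3 : ℚ) • tvec 5

/-- The root lattice `F = F_{Q̂₈}`: the ℤ-span of the basis vectors. -/
def FQ8 : AddSubgroup (Fin 19 → ℚ) := AddSubgroup.closure (Set.range evec)

/-- The Kummer lattice `K = K_{Q̂₈} = F + ℤδ₁ + ℤδ₂`. -/
def KQ8 : AddSubgroup (Fin 19 → ℚ) := AddSubgroup.closure (Set.range evec ∪ {δ₁, δ₂})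

/-- Every element of `K` is an integer vector plus an integer combination of `δ₁, δ₂`. -/
lemma mem_KQ8_form (x : Fin 19 → ℚ) (hx : x ∈ KQ8) :
    ∃ (a b : ℤ) (n : Fin 19 → ℤ), ∀ p, x p = n p + a * δ₁ p + b * δ₂ p := by
  unfold KQ8 at hx
  induction hx using AddSubgroup.closure_induction with
  | mem x hx =>
    rcases hx with ⟨i, rfl⟩ | rfl | rfl
    · refine ⟨0, 0, Pi.single i 1, fun p => ?_⟩
      by_cases h : p = i
      · subst h; simp [evec]
      · simp [evec, h]
    · exact ⟨1, 0, 0, fun p => by simp⟩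
    · exact ⟨0, 1, 0, fun p => by simp⟩
  | zero => exact ⟨0, 0, 0, fun p => by simp⟩
  | add x y _ _ h1 h2 =>
    obtain ⟨a, b, n, h⟩ := h1
    obtain ⟨a2, b2, n2, h'⟩ := h2
    refine ⟨a + a2, b + b2, n + n2, fun p => ?_⟩
    simp only [Pi.add_apply, h, h']
    push_cast
    ring
  | neg x _ h1 =>
    obtain ⟨a, b, n, h⟩ := h1
    refine ⟨-a, -b, -n, fun p => ?_⟩
    simp only [Pi.neg_apply, h]
    push_cast
    ring

/-- Integer vectors lie in `F`. -/
lemma mem_FQ8_of_int (x : Fin 19 → ℚ) (n : Fin 19 → ℤ) (h : ∀ p, x p = n p) : x ∈ FQ8 := by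
  have hx : x = ∑ i, n i • evec i := by
    funext p
    simp [evec, h, Finset.sum_apply, Pi.single_apply]
  rw [hx]
  exact AddSubgroup.sum_mem _ fun i _ =>
    AddSubgroup.zsmul_mem _ (AddSubgroup.subset_closure (Set.mem_range_self i)) _

/-- `16` times the norm of an element of the dual of `A₃`. -/
def qA3 (u v w k : ℤ) : ℤ :=
  (4 * u + k) ^ 2 + (4 * (v - u) + k) ^ 2 + (4 * (w - v) + k) ^ 2 + (4 * w + 3 * k) ^ 2

lemma qA3_nonneg (u v w k : ℤ) : 0 ≤ qA3 u v w k := by unfold qA3; positivity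

lemma sq_ge_one (a : ℤ) (h : a ≠ 0) : 1 ≤ a ^ 2 := by
  have := sq_pos_of_ne_zero h
  omega

lemma sq_ge_nine (a : ℤ) (h : a ≤ -3 ∨ 3 ≤ a) : 9 ≤ a ^ 2 := by
  rcases h with h | h <;> nlinarith

lemma sq_ge_four (a : ℤ) (h : a ≤ -2 ∨ 2 ≤ a) : 4 ≤ a ^ 2 := by
  rcases h with h | h <;> nlinarith

/-- The nontrivial cosets of `A₃` in its dual have norm at least `3/4`. -/
lemma qA3_ge (u v w k : ℤ) (hk : k % 4 ≠ 0) : 12 ≤ qA3 u v w k := by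
  unfold qA3
  have a1 := sq_ge_one (4 * u + k) (by omega)
  have a2 := sq_ge_one (4 * (v - u) + k) (by omega)
  have a3 := sq_ge_one (4 * (w - v) + k) (by omega)
  have a4 := sq_ge_one (4 * w + 3 * k) (by omega)
  by_cases h2 : k % 2 = 0
  · have b1 := sq_ge_four (4 * u + k) (by omega)
    have b2 := sq_ge_four (4 * (v - u) + k) (by omega)
    have b3 := sq_ge_four (4 * (w - v) + k) (by omega)
    linarith
  · by_cases c1 : 4 * u + k ≤ -3 ∨ 3 ≤ 4 * u + k
    · linarith [sq_ge_nine _ c1]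
    by_cases c2 : 4 * (v - u) + k ≤ -3 ∨ 3 ≤ 4 * (v - u) + k
    · linarith [sq_ge_nine _ c2]
    by_cases c3 : 4 * (w - v) + k ≤ -3 ∨ 3 ≤ 4 * (w - v) + k
    · linarith [sq_ge_nine _ c3]
    have e1 : u = v - u := by omega
    have e2 : u = w - v := by omega
    linarith [sq_ge_nine (4 * w + 3 * k) (by omega)]

set_option maxRecDepth 20000 in
set_option maxHeartbeats 4000000 in
/-- The form as a sum of squares. -/
lemma BQ8_self (x : Fin 19 → ℚ) : BQ8 x x = -(2 * x 0 ^ 2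
    + (x 1 ^ 2 + (x 2 - x 1) ^ 2 + (x 3 - x 2) ^ 2 + x 3 ^ 2)
    + (x 4 ^ 2 + (x 5 - x 4) ^ 2 + (x 6 - x 5) ^ 2 + x 6 ^ 2)
    + (x 7 ^ 2 + (x 8 - x 7) ^ 2 + (x 9 - x 8) ^ 2 + x 9 ^ 2)
    + (x 10 ^ 2 + (x 11 - x 10) ^ 2 + (x 12 - x 11) ^ 2 + x 12 ^ 2)
    + (x 13 ^ 2 + (x 14 - x 13) ^ 2 + (x 15 - x 14) ^ 2 + x 15 ^ 2)
    + (x 16 ^ 2 + (x 17 - x 16) ^ 2 + (x 18 - x 17) ^ 2 + x 18 ^ 2)) := by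
  have hg : ∀ p q : Fin 19, gramQ8 p q = if p = q then -2
    else if (p.1 = q.1 + 1 ∨ q.1 = p.1 + 1) ∧ 1 ≤ p.1 ∧ 1 ≤ q.1 ∧
      (p.1 - 1) / 3 = (q.1 - 1) / 3 then 1 else 0 := fun _ _ => rfl
  unfold BQ8
  simp only [Fin.sum_univ_succ, hg]
  simp [Fin.ext_iff]
  ring

/-- `16 ⟨x,x⟩` in terms of integer coordinates. -/
lemma BQ8_form (x : Fin 19 → ℚ) (a b : ℤ) (n : Fin 19 → ℤ)
    (h : ∀ p, x p = n p + a * δ₁ p + b * δ₂ p) :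
    16 * BQ8 x x = -((32 * n 0 ^ 2 + qA3 (n 1) (n 2) (n 3) (a + b)
      + qA3 (n 4) (n 5) (n 6) (a + 3 * b) + qA3 (n 7) (n 8) (n 9) (a + 2 * b)
      + qA3 (n 10) (n 11) (n 12) a + qA3 (n 13) (n 14) (n 15) (2 * a + b)
      + qA3 (n 16) (n 17) (n 18) (3 * b) : ℤ) : ℚ) := by
  rw [BQ8_self]
  simp only [h]
  simp [δ₁, δ₂, tvec, qA3]
  ring

lemma root_mem (x : Fin 19 → ℚ) (hx : x ∈ KQ8) (hB : BQ8 x x = -2) : x ∈ FQ8 := by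
  obtain ⟨a, b, n, h⟩ := mem_KQ8_form x hx
  have key := BQ8_form x a b n h
  rw [hB] at key
  have key2 : 32 * n 0 ^ 2 + qA3 (n 1) (n 2) (n 3) (a + b)
      + qA3 (n 4) (n 5) (n 6) (a + 3 * b) + qA3 (n 7) (n 8) (n 9) (a + 2 * b)
      + qA3 (n 10) (n 11) (n 12) a + qA3 (n 13) (n 14) (n 15) (2 * a + b)
      + qA3 (n 16) (n 17) (n 18) (3 * b) = 32 := by
    have : ((32 * n 0 ^ 2 + qA3 (n 1) (n 2) (n 3) (a + b)
      + qA3 (n 4) (n 5) (n 6) (a + 3 * b) + qA3 (n 7) (n 8) (n 9) (a + 2 * b)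
      + qA3 (n 10) (n 11) (n 12) a + qA3 (n 13) (n 14) (n 15) (2 * a + b)
      + qA3 (n 16) (n 17) (n 18) (3 * b) : ℤ) : ℚ) = 32 := by linarith
    exact_mod_cast this
  have h0 : 0 ≤ n 0 ^ 2 := sq_nonneg _
  have p1 := qA3_nonneg (n 1) (n 2) (n 3) (a + b)
  have p2 := qA3_nonneg (n 4) (n 5) (n 6) (a + 3 * b)
  have p3 := qA3_nonneg (n 7) (n 8) (n 9) (a + 2 * b)
  have p4 := qA3_nonneg (n 10) (n 11) (n 12) a
  have p5 := qA3_nonneg (n 13) (n 14) (n 15) (2 * a + b)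
  have p6 := qA3_nonneg (n 16) (n 17) (n 18) (3 * b)
  have g1 := qA3_ge (n 1) (n 2) (n 3) (a + b)
  have g2 := qA3_ge (n 4) (n 5) (n 6) (a + 3 * b)
  have g3 := qA3_ge (n 7) (n 8) (n 9) (a + 2 * b)
  have g4 := qA3_ge (n 10) (n 11) (n 12) a
  have g5 := qA3_ge (n 13) (n 14) (n 15) (2 * a + b)
  have g6 := qA3_ge (n 16) (n 17) (n 18) (3 * b)
  generalize n 0 ^ 2 = s at *
  generalize qA3 (n 1) (n 2) (n 3) (a + b) = q1 at *
  generalize qA3 (n 4) (n 5) (n 6) (a + 3 * b) = q2 at *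
  generalize qA3 (n 7) (n 8) (n 9) (a + 2 * b) = q3 at *
  generalize qA3 (n 10) (n 11) (n 12) a = q4 at *
  generalize qA3 (n 13) (n 14) (n 15) (2 * a + b) = q5 at *
  generalize qA3 (n 16) (n 17) (n 18) (3 * b) = q6 at *
  clear key
  have hab : a % 4 = 0 ∧ b % 4 = 0 := by
    have ha : a % 4 = 0 ∨ a % 4 = 1 ∨ a % 4 = 2 ∨ a % 4 = 3 := by omega
    have hb : b % 4 = 0 ∨ b % 4 = 1 ∨ b % 4 = 2 ∨ b % 4 = 3 := by omega
    rcases ha with ha | ha | ha | ha <;> rcases hb with hb | hb | hb | hb <;> omega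
  obtain ⟨c, rfl⟩ : (4 : ℤ) ∣ a := Int.dvd_of_emod_eq_zero hab.1
  obtain ⟨d, rfl⟩ : (4 : ℤ) ∣ b := Int.dvd_of_emod_eq_zero hab.2
  have d1 : ∀ p, ∃ m : ℤ, 4 * δ₁ p = m := by
    intro p
    refine ⟨(![0, 1, 2, 3, 1, 2, 3, 1, 2, 3, 1, 2, 3, 2, 4, 6, 0, 0, 0] : Fin 19 → ℤ) p, ?_⟩
    fin_cases p <;> simp [δ₁, tvec] <;> norm_num
  have d2 : ∀ p, ∃ m : ℤ, 4 * δ₂ p = m := by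
    intro p
    refine ⟨(![0, 1, 2, 3, 3, 6, 9, 2, 4, 6, 0, 0, 0, 1, 2, 3, 3, 6, 9] : Fin 19 → ℤ) p, ?_⟩
    fin_cases p <;> simp [δ₂, tvec] <;> norm_num
  choose m1 hm1 using d1
  choose m2 hm2 using d2
  refine mem_FQ8_of_int x (fun p => n p + c * m1 p + d * m2 p) fun p => ?_
  rw [h p]
  push_cast
  rw [← hm1, ← hm2]
  ring

theorem roots_of_KQ8_eq_roots_of_FQ8 :
    (∀ x ∈ KQ8, BQ8 x x = -2 → x ∈ FQ8) ∧
    {x : Fin 19 → ℚ | x ∈ KQ8 ∧ BQ8 x x = -2} =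
      {x : Fin 19 → ℚ | x ∈ FQ8 ∧ BQ8 x x = -2} := by
  refine ⟨root_mem, ?_⟩
  ext x
  refine ⟨fun h => ⟨root_mem x h.1 h.2, h.2⟩, fun h => ⟨?_, h.2⟩⟩
  exact AddSubgroup.closure_mono Set.subset_union_left h.1
end

section
/- Every element x of the lattice K = K_{T̂₂₄} = F + ℤγ with ⟨x,x⟩ = −2 already lies in F = F_{T̂₂₄}; that is, the roots of K_{T̂₂₄} coincide with the roots of the root lattice A₂^{⊕4} ⊕ A₃^{⊕2} ⊕ A₅. -/
/- STATEMENT 14: Every element x of K = K_{T̂₂₄} = F + ℤγ with ⟨x,x⟩ = −2 already lies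
in F = F_{T̂₂₄}; that is, the roots of K_{T̂₂₄} coincide with the roots of the root
lattice A₂^{⊕4} ⊕ A₃^{⊕2} ⊕ A₅. -/

open Finset

/-- Component label of index `n` for the lattice `A₂^{⊕4} ⊕ A₃^{⊕2} ⊕ A₅`:
indices 0–7 are the four `A₂`'s (pairs), 8–13 the two `A₃`'s (triples),
14–18 the `A₅` (chain). -/
def compT24 : ℕ → ℕ := fun n =>
  if n < 8 then n / 2 else if n < 14 then 4 + (n - 8) / 3 else 8

/-- Gram matrix of the (negative definite) root lattice `A₂^{⊕4} ⊕ A₃^{⊕2} ⊕ A₅`. -/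
def gramT24 : Fin 19 → Fin 19 → ℚ := fun p q =>
  if p = q then -2
  else if (p.1 = q.1 + 1 ∨ q.1 = p.1 + 1) ∧ compT24 p.1 = compT24 q.1 then 1
  else 0

/-- The bilinear form `⟨·,·⟩` on `F ⊗ ℚ = ℚ^19` given by the Gram matrix. -/
def BT24 (x y : Fin 19 → ℚ) : ℚ := ∑ p, ∑ q, x p * gramT24 p q * y q

/-- `γ = (1/3)(Σ_{r=1}^{4}(C_r^1 + 2C_r^2) + (e₁ + 2e₂) + (e₄ + 2e₅))`. -/
def γvec : Fin 19 → ℚ := fun p =>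
  if p.1 = 0 ∨ p.1 = 2 ∨ p.1 = 4 ∨ p.1 = 6 ∨ p.1 = 14 ∨ p.1 = 17 then 1 / 3
  else if p.1 = 1 ∨ p.1 = 3 ∨ p.1 = 5 ∨ p.1 = 7 ∨ p.1 = 15 ∨ p.1 = 18 then 2 / 3
  else 0

/-- The root lattice `F = F_{T̂₂₄}`: the ℤ-span of the basis vectors. -/
def FT24 : AddSubgroup (Fin 19 → ℚ) := AddSubgroup.closure (Set.range evec)

/-- The Kummer lattice `K = K_{T̂₂₄} = F + ℤγ`. -/
def KT24 : AddSubgroup (Fin 19 → ℚ) := AddSubgroup.closure (Set.range evec ∪ {γvec})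

lemma int_mem_FT24 (n : Fin 19 → ℤ) : (fun p => (n p : ℚ)) ∈ FT24 := by
  have h : (fun p => (n p : ℚ)) = ∑ p, n p • evec p := by
    funext q
    simp [evec, Finset.sum_apply, Pi.single_apply]
  rw [h]
  exact AddSubgroup.sum_mem _ fun p _ =>
    AddSubgroup.zsmul_mem _ (AddSubgroup.subset_closure (Set.mem_range_self p)) _

lemma mem_KT24_coords (x : Fin 19 → ℚ) (hx : x ∈ KT24) :
    ∃ (n : Fin 19 → ℤ) (k : ℤ), ∀ p, x p = n p + k * γvec p := by
  unfold KT24 at hx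
  induction hx using AddSubgroup.closure_induction with
  | mem y hy =>
    rcases hy with ⟨m, rfl⟩ | hy
    · refine ⟨Pi.single m 1, 0, fun p => ?_⟩
      by_cases h : p = m
      · subst h; simp [evec]
      · simp [evec, h]
    · rw [Set.mem_singleton_iff] at hy
      exact ⟨0, 1, fun p => by simp [hy]⟩
  | zero => exact ⟨0, 0, fun p => by simp⟩
  | add a b _ _ ha hb =>
    obtain ⟨n, k, h⟩ := ha
    obtain ⟨m, l, h'⟩ := hb
    exact ⟨n + m, k + l, fun p => by simp [h, h']; ring⟩
  | neg a _ ha =>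
    obtain ⟨n, k, h⟩ := ha
    exact ⟨-n, -k, fun p => by simp [h]; ring⟩

lemma A2_bound (a b k : ℤ) (hk : ¬ (3 : ℤ) ∣ k) (u v : ℚ)
    (hu : u = a + k * (1 / 3)) (hv : v = b + k * (2 / 3)) :
    1 / 3 ≤ u ^ 2 - u * v + v ^ 2 := by
  have h0 : 0 ≤ 3 * (a ^ 2 - a * b + b ^ 2 + k * b) + k ^ 2 := by
    nlinarith [sq_nonneg (2 * a - b), sq_nonneg (3 * b + 2 * k)]
  have h1 : 3 * (a ^ 2 - a * b + b ^ 2 + k * b) + k ^ 2 ≠ 0 := by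
    intro h
    apply hk
    have : (3 : ℤ) ∣ k ^ 2 := ⟨-(a ^ 2 - a * b + b ^ 2 + k * b), by linarith⟩
    exact Int.prime_three.dvd_of_dvd_pow this
  have h2 : 1 ≤ 3 * (a ^ 2 - a * b + b ^ 2 + k * b) + k ^ 2 := by omega
  have h3 : (1 : ℚ) ≤ 3 * (a ^ 2 - a * b + b ^ 2 + k * b) + k ^ 2 := by exact_mod_cast h2
  subst hu hv
  nlinarith

set_option maxRecDepth 100000 in
set_option maxHeartbeats 4000000 in
lemma BT24_self (x : Fin 19 → ℚ) : BT24 x x = -2 * (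
    (x 0 ^ 2 - x 0 * x 1 + x 1 ^ 2) + (x 2 ^ 2 - x 2 * x 3 + x 3 ^ 2)
    + (x 4 ^ 2 - x 4 * x 5 + x 5 ^ 2) + (x 6 ^ 2 - x 6 * x 7 + x 7 ^ 2))
    - (x 8 ^ 2 + (x 8 - x 9) ^ 2 + (x 9 - x 10) ^ 2 + x 10 ^ 2)
    - (x 11 ^ 2 + (x 11 - x 12) ^ 2 + (x 12 - x 13) ^ 2 + x 13 ^ 2)
    - (x 14 ^ 2 + (x 14 - x 15) ^ 2 + (x 15 - x 16) ^ 2 + (x 16 - x 17) ^ 2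
      + (x 17 - x 18) ^ 2 + x 18 ^ 2) := by
  simp only [BT24, Fin.sum_univ_succ, Fin.sum_univ_zero, Fin.reduceSucc]
  simp [gramT24, compT24]
  ring

lemma root_mem_s14 (x : Fin 19 → ℚ) (hx : x ∈ KT24) (hB : BT24 x x = -2) : x ∈ FT24 := by
  obtain ⟨n, k, h⟩ := mem_KT24_coords x hx
  by_cases hk : (3 : ℤ) ∣ k
  · obtain ⟨l, rfl⟩ := hk
    have hg : ∀ p, ∃ m : ℤ, 3 * γvec p = m := by
      intro p
      unfold γvec
      split_ifs
      · exact ⟨1, by norm_num⟩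
      · exact ⟨2, by norm_num⟩
      · exact ⟨0, by norm_num⟩
    choose m hm using hg
    have : x = fun p => ((n p + l * m p : ℤ) : ℚ) := by
      funext p
      rw [h p]
      push_cast
      rw [← hm p]
      ring
    rw [this]
    exact int_mem_FT24 _
  · exfalso
    have b0 := A2_bound (n 0) (n 1) k hk (x 0) (x 1)
      (by rw [h]; simp [γvec]) (by rw [h]; simp [γvec])
    have b1 := A2_bound (n 2) (n 3) k hk (x 2) (x 3)
      (by rw [h]; simp [γvec]) (by rw [h]; simp [γvec])
    have b2 := A2_bound (n 4) (n 5) k hk (x 4) (x 5)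
      (by rw [h]; simp [γvec]) (by rw [h]; simp [γvec])
    have b3 := A2_bound (n 6) (n 7) k hk (x 6) (x 7)
      (by rw [h]; simp [γvec]) (by rw [h]; simp [γvec])
    rw [BT24_self] at hB
    have p1 : 0 ≤ x 8 ^ 2 + (x 8 - x 9) ^ 2 + (x 9 - x 10) ^ 2 + x 10 ^ 2 := by positivity
    have p2 : 0 ≤ x 11 ^ 2 + (x 11 - x 12) ^ 2 + (x 12 - x 13) ^ 2 + x 13 ^ 2 := by positivity
    have p3 : 0 ≤ x 14 ^ 2 + (x 14 - x 15) ^ 2 + (x 15 - x 16) ^ 2 + (x 16 - x 17) ^ 2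
      + (x 17 - x 18) ^ 2 + x 18 ^ 2 := by positivity
    linarith

theorem roots_of_KT24_eq_roots_of_FT24 :
    (∀ x ∈ KT24, BT24 x x = -2 → x ∈ FT24) ∧
    {x : Fin 19 → ℚ | x ∈ KT24 ∧ BT24 x x = -2} =
      {x : Fin 19 → ℚ | x ∈ FT24 ∧ BT24 x x = -2} := by
  refine ⟨root_mem_s14, ?_⟩
  ext x
  constructor
  · rintro ⟨hx, hB⟩
    exact ⟨root_mem_s14 x hx hB, hB⟩
  · rintro ⟨hx, hB⟩
    exact ⟨AddSubgroup.closure_mono Set.subset_union_left hx, hB⟩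
end

section
/- An ADE configuration (α,δ,ε) satisfies m(𝒞) = 24 and ρ(𝒞) ≤ 19 if and only if it is one of the following eighteen configurations: 16A₁; 9A₂; 6A₁+4A₃; 5A₁+4A₂+A₅; 2A₁+3A₃+2D₄; 3A₁+4D₄; A₁+6A₃; A₁+2A₂+3A₃+D₅; A₁+4A₂+D₄+E₆; 4A₂+2A₃+A₅; 11A₁+2A₃; 7A₁+A₃+2D₄; 5A₁+A₃+A₇+D₄; 6A₁+2A₂+A₃+D₅; 5A₁+A₂+D₄+D₈; 5A₁+A₃+A₄+D₇; 2A₁+2A₂+2D₄+D₅; A₁+4A₂+2D₅. -/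
/- STATEMENT 15: An ADE configuration (α,δ,ε) satisfies m(𝒞) = 24 and ρ(𝒞) ≤ 19 if and
only if it is one of the eighteen listed configurations. -/

open Finsupp

/-- The Milnor-type invariant
`m(𝒞) = Σ (α_n+δ_n+ε_n)(n+1) − Σ α_n/(n+1) − Σ_{n≥4} δ_n/(4(n−2)) − ε₆/24 − ε₇/48 − ε₈/120`
of an ADE configuration `𝒞 = Σ α_n A_n + δ_n D_n + ε_n E_n`. -/
noncomputable def mADE (a d e : ℕ →₀ ℕ) : ℚ :=
  (a.sum fun n m => (m : ℚ) * (n + 1)) + (d.sum fun n m => (m : ℚ) * (n + 1)) +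
    (e.sum fun n m => (m : ℚ) * (n + 1)) -
  (a.sum fun n m => (m : ℚ) / (n + 1)) -
  (d.sum fun n m => (m : ℚ) / (4 * ((n : ℚ) - 2))) -
  (e 6 : ℚ) / 24 - (e 7 : ℚ) / 48 - (e 8 : ℚ) / 120

/-- The rank `ρ(𝒞) = Σ n(α_n + δ_n + ε_n)` of an ADE configuration. -/
def rhoADE (a d e : ℕ →₀ ℕ) : ℕ :=
  (a.sum fun n m => n * m) + (d.sum fun n m => n * m) + (e.sum fun n m => n * m)

/-!
Proof idea: the rank bound makes all three functions supported in `range 20`, so both conditions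
become (in)equalities between natural numbers (after clearing denominators); the finitely many
solutions are then listed by a verified depth-first search evaluated in the kernel.
-/

/-- All vectors `c` with `Σ nᵢ cᵢ ≤ r` and `Σ wᵢ cᵢ = m`, for a list of pairs `(nᵢ, wᵢ)`. -/
def adeSearch : List (ℕ × ℕ) → ℕ → ℕ → List (List ℕ)
  | [], _, m => if m = 0 then [[]] else []
  | t :: ts, r, m =>
    (List.range (min (r / t.1) (m / t.2) + 1)).flatMap fun k =>
      (adeSearch ts (r - t.1 * k) (m - t.2 * k)).map (List.cons k)

/-- Weighted sum of ranks. -/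
def adeRank : List (ℕ × ℕ) → List ℕ → ℕ
  | t :: ts, k :: ks => t.1 * k + adeRank ts ks
  | _, _ => 0

/-- Weighted sum of weights. -/
def adeWeight : List (ℕ × ℕ) → List ℕ → ℕ
  | t :: ts, k :: ks => t.2 * k + adeWeight ts ks
  | _, _ => 0

theorem mem_adeSearch (ts : List (ℕ × ℕ)) (hts : ∀ t ∈ ts, 0 < t.1 ∧ 0 < t.2) :
    ∀ (c : List ℕ) (r m : ℕ), c.length = ts.length → adeRank ts c ≤ r → adeWeight ts c = m →
      c ∈ adeSearch ts r m := by
  induction ts with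
  | nil =>
    intro c r m hc _ hm
    have : c = [] := by simpa using hc
    subst this
    simp [adeWeight] at hm
    simp [adeSearch, ← hm]
  | cons t ts ih =>
    intro c r m hc hr hm
    match c, hc with
    | k :: ks, hc =>
      simp only [adeRank] at hr
      simp only [adeWeight] at hm
      have ht := hts t (by simp)
      simp only [adeSearch, List.mem_flatMap, List.mem_range, List.mem_map]
      refine ⟨k, ?_, ks, ?_, rfl⟩
      · have h1 : k ≤ r / t.1 := by
          rw [Nat.le_div_iff_mul_le ht.1, mul_comm]; omega
        have h2 : k ≤ m / t.2 := by
          rw [Nat.le_div_iff_mul_le ht.2, mul_comm]; omega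
        omega
      · exact ih (fun t h => hts t (by simp [h])) ks _ _ (by simpa using hc) (by omega) (by omega)

/-- Ranks and weights (times 931170240) of E₈, E₇, E₆, D₁₉, …, D₄, A₁₉, …, A₁. -/
def adeTypes : List (ℕ × ℕ) :=
  [(8, 8372772408),
   (7, 7429962540),
   (6, 6479392920),
   (19, 18609711120),
   (18, 17677685025),
   (17, 16745544816),
   (16, 15813266040),
   (15, 14880816720),
   (14, 13948154220),
   (13, 13015220400),
   (12, 12081933864),
   (11, 11148177040),
   (10, 10213773570),
   (9, 9278446320),
   (8, 8341733400),
   (7, 7402803408),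
   (6, 6459993540),
   (5, 5509423920),
   (4, 4539454920),
   (19, 18576846288),
   (18, 17643225600),
   (17, 16709332640),
   (16, 15775119360),
   (15, 14840525700),
   (14, 13905475584),
   (13, 12969871200),
   (12, 12033584640),
   (11, 11096445360),
   (10, 10158220800),
   (9, 9218585376),
   (8, 8277068800),
   (7, 7332965640),
   (6, 6385167360),
   (5, 5431826400),
   (4, 4469617152),
   (3, 3491888400),
   (2, 2483120640),
   (1, 1396755360)]

/-- The eighteen solutions. -/
def adeSols : List (List ℕ) :=
  [[0, 0, 0, 0, 0, 0, 0, 0, 0, 0, 0, 0, 0, 0, 0, 0, 0, 0, 0, 0, 0, 0, 0, 0, 0, 0, 0, 0, 0, 0, 0, 0, 0, 0, 0, 0, 0, 16],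
   [0, 0, 0, 0, 0, 0, 0, 0, 0, 0, 0, 0, 0, 0, 0, 0, 0, 0, 0, 0, 0, 0, 0, 0, 0, 0, 0, 0, 0, 0, 0, 0, 0, 0, 0, 0, 9, 0],
   [0, 0, 0, 0, 0, 0, 0, 0, 0, 0, 0, 0, 0, 0, 0, 0, 0, 0, 0, 0, 0, 0, 0, 0, 0, 0, 0, 0, 0, 0, 0, 0, 0, 0, 0, 4, 0, 6],
   [0, 0, 0, 0, 0, 0, 0, 0, 0, 0, 0, 0, 0, 0, 0, 0, 0, 0, 0, 0, 0, 0, 0, 0, 0, 0, 0, 0, 0, 0, 0, 0, 0, 1, 0, 0, 4, 5],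
   [0, 0, 0, 0, 0, 0, 0, 0, 0, 0, 0, 0, 0, 0, 0, 0, 0, 0, 2, 0, 0, 0, 0, 0, 0, 0, 0, 0, 0, 0, 0, 0, 0, 0, 0, 3, 0, 2],
   [0, 0, 0, 0, 0, 0, 0, 0, 0, 0, 0, 0, 0, 0, 0, 0, 0, 0, 4, 0, 0, 0, 0, 0, 0, 0, 0, 0, 0, 0, 0, 0, 0, 0, 0, 0, 0, 3],
   [0, 0, 0, 0, 0, 0, 0, 0, 0, 0, 0, 0, 0, 0, 0, 0, 0, 0, 0, 0, 0, 0, 0, 0, 0, 0, 0, 0, 0, 0, 0, 0, 0, 0, 0, 6, 0, 1],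
   [0, 0, 0, 0, 0, 0, 0, 0, 0, 0, 0, 0, 0, 0, 0, 0, 0, 1, 0, 0, 0, 0, 0, 0, 0, 0, 0, 0, 0, 0, 0, 0, 0, 0, 0, 3, 2, 1],
   [0, 0, 1, 0, 0, 0, 0, 0, 0, 0, 0, 0, 0, 0, 0, 0, 0, 0, 1, 0, 0, 0, 0, 0, 0, 0, 0, 0, 0, 0, 0, 0, 0, 0, 0, 0, 4, 1],
   [0, 0, 0, 0, 0, 0, 0, 0, 0, 0, 0, 0, 0, 0, 0, 0, 0, 0, 0, 0, 0, 0, 0, 0, 0, 0, 0, 0, 0, 0, 0, 0, 0, 1, 0, 2, 4, 0],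
   [0, 0, 0, 0, 0, 0, 0, 0, 0, 0, 0, 0, 0, 0, 0, 0, 0, 0, 0, 0, 0, 0, 0, 0, 0, 0, 0, 0, 0, 0, 0, 0, 0, 0, 0, 2, 0, 11],
   [0, 0, 0, 0, 0, 0, 0, 0, 0, 0, 0, 0, 0, 0, 0, 0, 0, 0, 2, 0, 0, 0, 0, 0, 0, 0, 0, 0, 0, 0, 0, 0, 0, 0, 0, 1, 0, 7],
   [0, 0, 0, 0, 0, 0, 0, 0, 0, 0, 0, 0, 0, 0, 0, 0, 0, 0, 1, 0, 0, 0, 0, 0, 0, 0, 0, 0, 0, 0, 0, 1, 0, 0, 0, 1, 0, 5],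
   [0, 0, 0, 0, 0, 0, 0, 0, 0, 0, 0, 0, 0, 0, 0, 0, 0, 1, 0, 0, 0, 0, 0, 0, 0, 0, 0, 0, 0, 0, 0, 0, 0, 0, 0, 1, 2, 6],
   [0, 0, 0, 0, 0, 0, 0, 0, 0, 0, 0, 0, 0, 0, 1, 0, 0, 0, 1, 0, 0, 0, 0, 0, 0, 0, 0, 0, 0, 0, 0, 0, 0, 0, 0, 0, 1, 5],
   [0, 0, 0, 0, 0, 0, 0, 0, 0, 0, 0, 0, 0, 0, 0, 1, 0, 0, 0, 0, 0, 0, 0, 0, 0, 0, 0, 0, 0, 0, 0, 0, 0, 0, 1, 1, 0, 5],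
   [0, 0, 0, 0, 0, 0, 0, 0, 0, 0, 0, 0, 0, 0, 0, 0, 0, 1, 2, 0, 0, 0, 0, 0, 0, 0, 0, 0, 0, 0, 0, 0, 0, 0, 0, 0, 2, 2],
   [0, 0, 0, 0, 0, 0, 0, 0, 0, 0, 0, 0, 0, 0, 0, 0, 0, 2, 0, 0, 0, 0, 0, 0, 0, 0, 0, 0, 0, 0, 0, 0, 0, 0, 0, 0, 4, 1]]

theorem adeSearch_eq : ∀ c ∈ adeSearch adeTypes 19 22348085760, c ∈ adeSols := by
  decide +kernel


theorem ade_eval (a d e : ℕ →₀ ℕ) (ha0 : a 0 = 0) (hd : ∀ n ≤ 3, d n = 0)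
    (he : ∀ n : ℕ, n ≠ 6 → n ≠ 7 → n ≠ 8 → e n = 0)
    (ha' : ∀ n, 20 ≤ n → a n = 0) (hd' : ∀ n, 20 ≤ n → d n = 0) :
    mADE a d e * 931170240 = (adeWeight adeTypes
      [e 8, e 7, e 6, d 19, d 18, d 17, d 16, d 15, d 14, d 13, d 12, d 11, d 10, d 9, d 8, d 7, d 6, d 5, d 4, a 19, a 18, a 17, a 16, a 15, a 14, a 13, a 12, a 11, a 10, a 9, a 8, a 7, a 6, a 5, a 4, a 3, a 2, a 1] : ℕ) ∧
    rhoADE a d e = adeRank adeTypes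
      [e 8, e 7, e 6, d 19, d 18, d 17, d 16, d 15, d 14, d 13, d 12, d 11, d 10, d 9, d 8, d 7, d 6, d 5, d 4, a 19, a 18, a 17, a 16, a 15, a 14, a 13, a 12, a 11, a 10, a 9, a 8, a 7, a 6, a 5, a 4, a 3, a 2, a 1] := by
  have he' : ∀ n, 20 ≤ n → e n = 0 := fun n hn => he n (by omega) (by omega) (by omega)
  have hsub : ∀ f : ℕ →₀ ℕ, (∀ n, 20 ≤ n → f n = 0) → f.support ⊆ Finset.range 20 := by
    intro f hf n hn
    rw [Finset.mem_range]
    by_contra h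
    exact (Finsupp.mem_support_iff.1 hn) (hf n (by omega))
  have sa := hsub a ha'
  have sd := hsub d hd'
  have se := hsub e he'
  have d0 := hd 0 (by norm_num)
  have d1 := hd 1 (by norm_num)
  have d2 := hd 2 (by norm_num)
  have d3 := hd 3 (by norm_num)
  constructor
  · unfold mADE
    rw [Finsupp.sum_of_support_subset a sa _ (by simp),
      Finsupp.sum_of_support_subset d sd _ (by simp),
      Finsupp.sum_of_support_subset e se _ (by simp),
      Finsupp.sum_of_support_subset a sa _ (by simp),
      Finsupp.sum_of_support_subset d sd _ (by simp)]
    simp only [Finset.sum_range_succ, Finset.sum_range_zero, ha0, d0, d1, d2, d3, adeWeight, adeTypes]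
    rw [he 0 (by norm_num) (by norm_num) (by norm_num), he 1 (by norm_num) (by norm_num) (by norm_num), he 2 (by norm_num) (by norm_num) (by norm_num), he 3 (by norm_num) (by norm_num) (by norm_num), he 4 (by norm_num) (by norm_num) (by norm_num), he 5 (by norm_num) (by norm_num) (by norm_num), he 9 (by norm_num) (by norm_num) (by norm_num), he 10 (by norm_num) (by norm_num) (by norm_num), he 11 (by norm_num) (by norm_num) (by norm_num), he 12 (by norm_num) (by norm_num) (by norm_num), he 13 (by norm_num) (by norm_num) (by norm_num), he 14 (by norm_num) (by norm_num) (by norm_num), he 15 (by norm_num) (by norm_num) (by norm_num), he 16 (by norm_num) (by norm_num) (by norm_num), he 17 (by norm_num) (by norm_num) (by norm_num), he 18 (by norm_num) (by norm_num) (by norm_num), he 19 (by norm_num) (by norm_num) (by norm_num)]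
    push_cast
    ring
  · unfold rhoADE
    rw [Finsupp.sum_of_support_subset a sa _ (by simp),
      Finsupp.sum_of_support_subset d sd _ (by simp),
      Finsupp.sum_of_support_subset e se _ (by simp)]
    simp only [Finset.sum_range_succ, Finset.sum_range_zero, ha0, d0, d1, d2, d3, adeRank, adeTypes]
    rw [he 0 (by norm_num) (by norm_num) (by norm_num), he 1 (by norm_num) (by norm_num) (by norm_num), he 2 (by norm_num) (by norm_num) (by norm_num), he 3 (by norm_num) (by norm_num) (by norm_num), he 4 (by norm_num) (by norm_num) (by norm_num), he 5 (by norm_num) (by norm_num) (by norm_num), he 9 (by norm_num) (by norm_num) (by norm_num), he 10 (by norm_num) (by norm_num) (by norm_num), he 11 (by norm_num) (by norm_num) (by norm_num), he 12 (by norm_num) (by norm_num) (by norm_num), he 13 (by norm_num) (by norm_num) (by norm_num), he 14 (by norm_num) (by norm_num) (by norm_num), he 15 (by norm_num) (by norm_num) (by norm_num), he 16 (by norm_num) (by norm_num) (by norm_num), he 17 (by norm_num) (by norm_num) (by norm_num), he 18 (by norm_num) (by norm_num) (by norm_num), he 19 (by norm_num) (by norm_num) (by norm_num)]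
    ring

theorem mul_le_finsupp_sum (f : ℕ →₀ ℕ) (n : ℕ) : n * f n ≤ f.sum fun n m => n * m := by
  by_cases h : n ∈ f.support
  · exact Finset.single_le_sum (f := fun n => n * f n) (fun _ _ => Nat.zero_le _) h
  · simp [Finsupp.notMem_support_iff.1 h]

theorem eq_zero_of_sum_le (f : ℕ →₀ ℕ) (h : (f.sum fun n m => n * m) ≤ 19) (n : ℕ)
    (hn : 20 ≤ n) : f n = 0 := by
  have h1 := mul_le_finsupp_sum f n
  by_contra h0
  have : n * 1 ≤ n * f n := Nat.mul_le_mul_left n (by omega)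
  omega

theorem finsupp_ext_range (f g : ℕ →₀ ℕ) (hf : ∀ n, 20 ≤ n → f n = 0)
    (hg : ∀ n, 20 ≤ n → g n = 0) (h : ∀ n < 20, f n = g n) : f = g := by
  ext n
  by_cases hn : n < 20
  · exact h n hn
  · rw [hf n (by omega), hg n (by omega)]

set_option linter.unusedSimpArgs false in
set_option maxHeartbeats 4000000 in
theorem ade_configurations_with_m_eq_24_and_rank_le_19
    (a d e : ℕ →₀ ℕ)
    (ha0 : a 0 = 0)
    (hd : ∀ n ≤ 3, d n = 0)
    (he : ∀ n : ℕ, n ≠ 6 → n ≠ 7 → n ≠ 8 → e n = 0) :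
    (mADE a d e = 24 ∧ rhoADE a d e ≤ 19) ↔
      -- 16A₁
      ((a = single 1 16 ∧ d = 0 ∧ e = 0) ∨
      -- 9A₂
      (a = single 2 9 ∧ d = 0 ∧ e = 0) ∨
      -- 6A₁ + 4A₃
      (a = single 1 6 + single 3 4 ∧ d = 0 ∧ e = 0) ∨
      -- 5A₁ + 4A₂ + A₅
      (a = single 1 5 + single 2 4 + single 5 1 ∧ d = 0 ∧ e = 0) ∨
      -- 2A₁ + 3A₃ + 2D₄
      (a = single 1 2 + single 3 3 ∧ d = single 4 2 ∧ e = 0) ∨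
      -- 3A₁ + 4D₄
      (a = single 1 3 ∧ d = single 4 4 ∧ e = 0) ∨
      -- A₁ + 6A₃
      (a = single 1 1 + single 3 6 ∧ d = 0 ∧ e = 0) ∨
      -- A₁ + 2A₂ + 3A₃ + D₅
      (a = single 1 1 + single 2 2 + single 3 3 ∧ d = single 5 1 ∧ e = 0) ∨
      -- A₁ + 4A₂ + D₄ + E₆
      (a = single 1 1 + single 2 4 ∧ d = single 4 1 ∧ e = single 6 1) ∨
      -- 4A₂ + 2A₃ + A₅
      (a = single 2 4 + single 3 2 + single 5 1 ∧ d = 0 ∧ e = 0) ∨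
      -- 11A₁ + 2A₃
      (a = single 1 11 + single 3 2 ∧ d = 0 ∧ e = 0) ∨
      -- 7A₁ + A₃ + 2D₄
      (a = single 1 7 + single 3 1 ∧ d = single 4 2 ∧ e = 0) ∨
      -- 5A₁ + A₃ + A₇ + D₄
      (a = single 1 5 + single 3 1 + single 7 1 ∧ d = single 4 1 ∧ e = 0) ∨
      -- 6A₁ + 2A₂ + A₃ + D₅
      (a = single 1 6 + single 2 2 + single 3 1 ∧ d = single 5 1 ∧ e = 0) ∨
      -- 5A₁ + A₂ + D₄ + D₈
      (a = single 1 5 + single 2 1 ∧ d = single 4 1 + single 8 1 ∧ e = 0) ∨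
      -- 5A₁ + A₃ + A₄ + D₇
      (a = single 1 5 + single 3 1 + single 4 1 ∧ d = single 7 1 ∧ e = 0) ∨
      -- 2A₁ + 2A₂ + 2D₄ + D₅
      (a = single 1 2 + single 2 2 ∧ d = single 4 2 + single 5 1 ∧ e = 0) ∨
      -- A₁ + 4A₂ + 2D₅
      (a = single 1 1 + single 2 4 ∧ d = single 5 2 ∧ e = 0)) := by
  constructor
  · rintro ⟨hm, hr⟩
    have hr' := hr
    unfold rhoADE at hr'
    have ha' := eq_zero_of_sum_le a (by omega)
    have hd' := eq_zero_of_sum_le d (by omega)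
    have he' := eq_zero_of_sum_le e (by omega)
    obtain ⟨h1, h2⟩ := ade_eval a d e ha0 hd he ha' hd'
    rw [hm] at h1
    rw [h2] at hr
    have h3 := adeSearch_eq _ (mem_adeSearch adeTypes (by decide +kernel) _ 19 22348085760 rfl hr
      (by rw [← Nat.cast_inj (R := ℚ), ← h1]; norm_num))
    clear h1 h2 hm hr hr'
    have e0 : ∀ n < 20, n ≠ 6 → n ≠ 7 → n ≠ 8 → e n = 0 := fun n _ => he n
    simp only [adeSols, List.mem_cons, List.not_mem_nil, or_false, List.cons.injEq, and_true] at h3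
    revert h3
    repeat' apply Or.imp
    all_goals
      intro h3
      refine ⟨?_, ?_, ?_⟩ <;>
        (refine finsupp_ext_range _ _ (by assumption) ?_ ?_
         · intro n hn
           simp [Finsupp.single_apply] <;> omega
         · intro n hn
           interval_cases n <;> simp [Finsupp.single_apply, *])
  · intro h
    have ha' : ∀ n, 20 ≤ n → a n = 0 := by
      intro n hn
      rcases h with h | h | h | h | h | h | h | h | h | h | h | h | h | h | h | h | h | h <;> simp [h.1, Finsupp.single_apply] <;> omega
    have hd' : ∀ n, 20 ≤ n → d n = 0 := by
      intro n hn
      rcases h with h | h | h | h | h | h | h | h | h | h | h | h | h | h | h | h | h | h <;> simp [h.2.1, Finsupp.single_apply] <;> omega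
    obtain ⟨h1, h2⟩ := ade_eval a d e ha0 hd he ha' hd'
    have h3 : mADE a d e = 24 ↔ mADE a d e * 931170240 = 24 * 931170240 := by
      constructor <;> intro h <;> linarith
    rw [h3, h1, h2]
    clear h1 h2 h3 ha' hd' ha0 hd he
    rcases h with h | h | h | h | h | h | h | h | h | h | h | h | h | h | h | h | h | h <;> obtain ⟨rfl, rfl, rfl⟩ := h <;>
      simp [adeTypes, adeWeight, adeRank, Finsupp.single_apply] <;> norm_num
end
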